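/- The distribution parameter of the C-ruled surface satisfies P(s) = τ(s)/(f(s)² + g(s)²) for all s ∈ ℝ; consequently P(s) = 0 for all s if and only if τ(s) = 0 for all s (the C-ruled surface is developable if and only if α is a planar curve). -/

import Mathlib

open RealInnerProductSpace

/-- Cross product on `EuclideanSpace ℝ (Fin 3)`. -/
noncomputable def cross3 (u v : EuclideanSpace ℝ (Fin 3)) : EuclideanSpace ℝ (Fin 3) :=
  (EuclideanSpace.equiv (Fin 3) ℝ).symm
    (crossProduct ((EuclideanSpace.equiv (Fin 3) ℝ) u) ((EuclideanSpace.equiv (Fin 3) ℝ) v))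

/-- Determinant of the 3×3 matrix whose rows are the given vectors. -/
noncomputable def det3 (u v w : EuclideanSpace ℝ (Fin 3)) : ℝ :=
  Matrix.det (Matrix.of ![(EuclideanSpace.equiv (Fin 3) ℝ) u,
    (EuclideanSpace.equiv (Fin 3) ℝ) v, (EuclideanSpace.equiv (Fin 3) ℝ) w])

/-!
Both `f` and `g` come from the equations `N' = f C` and `C' = -f N + g W` of the orthonormal moving
frame `N, C, W`. Hence `‖C'‖² = f² + g²`, and since `T × C = -(τ / f) N` for `T × N = B`, the
triple product is `det (T, C, C') = ⟪T × C, C'⟫ = (-τ / f) (-f) = τ`.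
-/

section CrossProduct

open scoped Matrix

variable {u v w : EuclideanSpace ℝ (Fin 3)}

theorem inner_left_cross3 (u v : EuclideanSpace ℝ (Fin 3)) : ⟪u, cross3 u v⟫ = 0 :=
  (real_inner_comm _ _).trans (dot_self_cross u.ofLp v.ofLp)

theorem inner_right_cross3 (u v : EuclideanSpace ℝ (Fin 3)) : ⟪v, cross3 u v⟫ = 0 :=
  (real_inner_comm _ _).trans (dot_cross_self u.ofLp v.ofLp)

theorem cross3_self (u : EuclideanSpace ℝ (Fin 3)) : cross3 u u = 0 := by
  simp [cross3]

theorem cross3_cross3_right (u v w : EuclideanSpace ℝ (Fin 3)) :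
    cross3 u (cross3 v w) = ⟪u, w⟫ • v - ⟪u, v⟫ • w := by
  rw [real_inner_comm w u]
  exact congrArg (WithLp.toLp 2) (cross_cross_eq_smul_sub_smul' u.ofLp v.ofLp w.ofLp)

theorem det3_eq_inner_cross3 (u v w : EuclideanSpace ℝ (Fin 3)) :
    det3 u v w = ⟪cross3 u v, w⟫ :=
  calc
    det3 u v w = u.ofLp ⬝ᵥ v.ofLp ⨯₃ w.ofLp := (triple_product_eq_det _ _ _).symm
    _ = w.ofLp ⬝ᵥ u.ofLp ⨯₃ v.ofLp := (triple_product_permutation _ _ _).symm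
    _ = ⟪cross3 u v, w⟫ := rfl

theorem norm_cross3_eq_mul_sin_angle (u v : EuclideanSpace ℝ (Fin 3)) :
    ‖cross3 u v‖ = ‖u‖ * ‖v‖ * Real.sin (InnerProductGeometry.angle u v) :=
  InnerProductGeometry.norm_ofLp_crossProduct u v

theorem norm_cross3_of_inner_eq_zero (huv : ⟪u, v⟫ = 0) : ‖cross3 u v‖ = ‖u‖ * ‖v‖ := by
  rw [norm_cross3_eq_mul_sin_angle,
    (InnerProductGeometry.inner_eq_zero_iff_angle_eq_pi_div_two u v).1 huv,
    Real.sin_pi_div_two, mul_one]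

theorem isBoundedBilinearMap_cross3 :
    IsBoundedBilinearMap ℝ fun p : EuclideanSpace ℝ (Fin 3) × EuclideanSpace ℝ (Fin 3) =>
      cross3 p.1 p.2 where
  add_left u₁ u₂ v := by simp [cross3]
  smul_left a u v := by simp [cross3]
  add_right u v₁ v₂ := by simp [cross3]
  smul_right a u v := by simp [cross3]
  bound := by
    refine ⟨1, one_pos, fun u v => ?_⟩
    rw [norm_cross3_eq_mul_sin_angle, one_mul]
    exact mul_le_of_le_one_right (by positivity) (Real.sin_le_one _)

theorem cross3_smul_add_smul_right (u v w : EuclideanSpace ℝ (Fin 3)) (a b : ℝ) :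
    cross3 u (a • v + b • w) = a • cross3 u v + b • cross3 u w := by
  simp [cross3]

theorem hasDerivAt_cross3 {x y : ℝ → EuclideanSpace ℝ (Fin 3)} {x' y' : EuclideanSpace ℝ (Fin 3)}
    {s : ℝ} (hx : HasDerivAt x x' s) (hy : HasDerivAt y y' s) :
    HasDerivAt (fun t => cross3 (x t) (y t)) (cross3 (x s) y' + cross3 x' (y s)) s :=
  by
  have h := (isBoundedBilinearMap_cross3.hasFDerivAt (x s, y s)).comp_hasDerivAt_of_eq s
    (hx.prodMk hy) rfl
  rwa [isBoundedBilinearMap_cross3.deriv_apply] at h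

theorem orthonormal_cross3 (hu : ‖u‖ = 1) (hv : ‖v‖ = 1) (huv : ⟪u, v⟫ = 0) :
    Orthonormal ℝ ![u, v, cross3 u v] := by
  have hnorm : ‖cross3 u v‖ = 1 := by rw [norm_cross3_of_inner_eq_zero huv, hu, hv, one_mul]
  have hvu : ⟪v, u⟫ = 0 := (real_inner_comm _ _).trans huv
  have hcross_u : ⟪cross3 u v, u⟫ = 0 := (real_inner_comm _ _).trans (inner_left_cross3 u v)
  have hcross_v : ⟪cross3 u v, v⟫ = 0 := (real_inner_comm _ _).trans (inner_right_cross3 u v)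
  rw [orthonormal_iff_ite]
  intro i j
  fin_cases i <;> fin_cases j <;>
    simp [hu, hv, hnorm, huv, hvu, hcross_u, hcross_v, inner_left_cross3, inner_right_cross3]

theorem eq_inner_smul_add_inner_smul_cross3 (hu : ‖u‖ = 1) (hv : ‖v‖ = 1) (huv : ⟪u, v⟫ = 0) :
    w = ⟪u, w⟫ • u + ⟪v, w⟫ • v + ⟪cross3 u v, w⟫ • cross3 u v := by
  have ho := orthonormal_cross3 hu hv huv
  let b := (basisOfOrthonormalOfCardEqFinrank ho (by simp)).toOrthonormalBasis (by simpa using ho)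
  have h := b.sum_repr' w
  simpa [b, Fin.sum_univ_three] using h.symm

end CrossProduct

section Calculus

theorem hasDerivAt_div_sqrt_sq_add_sq {x y : ℝ → ℝ} {x' y' s : ℝ} (hx : HasDerivAt x x' s)
    (hy : HasDerivAt y y' s) (hxy : x s ^ 2 + y s ^ 2 ≠ 0) :
    HasDerivAt (fun t => x t / √(x t ^ 2 + y t ^ 2))
      (y s * (x' * y s - x s * y') / √(x s ^ 2 + y s ^ 2) ^ 3) s := by
  have hsq : √(x s ^ 2 + y s ^ 2) ^ 2 = x s ^ 2 + y s ^ 2 := Real.sq_sqrt (by positivity)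
  have hsqrt : √(x s ^ 2 + y s ^ 2) ≠ 0 := (Real.sqrt_ne_zero (by positivity)).2 hxy
  refine (hx.fun_div (((hx.fun_pow 2).fun_add (hy.fun_pow 2)).sqrt hxy) hsqrt).congr_deriv ?_
  field_simp
  rw [hsq]
  push_cast
  ring

variable {E : Type*} [NormedAddCommGroup E] [InnerProductSpace ℝ E]

theorem inner_add_inner_eq_zero_of_inner_eq_const {x y : ℝ → E} {x' y' : E} {s c : ℝ}
    (hx : HasDerivAt x x' s) (hy : HasDerivAt y y' s) (hxy : ∀ t, ⟪x t, y t⟫ = c) :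
    ⟪x s, y'⟫ + ⟪x', y s⟫ = 0 := by
  have h := hx.inner ℝ hy
  rw [funext hxy] at h
  exact h.unique (hasDerivAt_const s c)

theorem inner_deriv_eq_zero_of_norm_eq_const {x : ℝ → E} {x' : E} {s c : ℝ}
    (hx : HasDerivAt x x' s) (hnorm : ∀ t, ‖x t‖ = c) : ⟪x s, x'⟫ = 0 := by
  have h := inner_add_inner_eq_zero_of_inner_eq_const (c := c ^ 2) hx hx fun t => by
    rw [real_inner_self_eq_norm_sq, hnorm]
  rw [real_inner_comm (x s) x'] at h
  linarith

end Calculus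

/-- `T, N, B` is a positively oriented orthonormal moving frame satisfying the Frenet equations
with curvature `κ` and torsion `τ`. The equation `B' = -τ N` is a consequence of the others. -/
structure IsFrenetFrame (T N B : ℝ → EuclideanSpace ℝ (Fin 3)) (κ τ : ℝ → ℝ) : Prop where
  norm_tangent (s : ℝ) : ‖T s‖ = 1
  norm_normal (s : ℝ) : ‖N s‖ = 1
  inner_tangent_normal (s : ℝ) : ⟪T s, N s⟫ = 0
  binormal_eq (s : ℝ) : B s = cross3 (T s) (N s)
  hasDerivAt_tangent (s : ℝ) : HasDerivAt T (κ s • N s) s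
  hasDerivAt_normal (s : ℝ) : HasDerivAt N ((-κ s) • T s + τ s • B s) s

section AlternativeFrame

/-- The alternative curvature `f` of a curve with curvature `κ` and torsion `τ`. -/
noncomputable def altCurvature (κ τ : ℝ → ℝ) (s : ℝ) : ℝ :=
  √(κ s ^ 2 + τ s ^ 2)

/-- The alternative curvature `g` of a curve with curvature `κ` and torsion `τ`. -/
noncomputable def altTorsion (κ τ : ℝ → ℝ) (s : ℝ) : ℝ :=
  κ s ^ 2 / (κ s ^ 2 + τ s ^ 2) * deriv (fun t => τ t / κ t) s

/-- The vector field `C` of the alternative moving frame `N, C, W`: the direction of `N'`. -/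
noncomputable def altFrameC (T B : ℝ → EuclideanSpace ℝ (Fin 3)) (κ τ : ℝ → ℝ) (s : ℝ) :
    EuclideanSpace ℝ (Fin 3) :=
  (√(κ s ^ 2 + τ s ^ 2))⁻¹ • ((-κ s) • T s + τ s • B s)

/-- The vector field `W` of the alternative moving frame `N, C, W`: the unit Darboux vector. -/
noncomputable def altFrameW (T B : ℝ → EuclideanSpace ℝ (Fin 3)) (κ τ : ℝ → ℝ) (s : ℝ) :
    EuclideanSpace ℝ (Fin 3) :=
  (√(κ s ^ 2 + τ s ^ 2))⁻¹ • (τ s • T s + κ s • B s)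

/-- The distribution parameter of a ruled surface `(s, v) ↦ α s + v • X s`, given the tangent field
`T = α'` of its base curve and its rulings `X`. -/
noncomputable def distributionParameter (T X : ℝ → EuclideanSpace ℝ (Fin 3)) (s : ℝ) : ℝ :=
  det3 (T s) (X s) (deriv X s) / ‖deriv X s‖ ^ 2

variable {κ τ : ℝ → ℝ} {s : ℝ}

theorem altCurvature_sq : altCurvature κ τ s ^ 2 = κ s ^ 2 + τ s ^ 2 :=
  Real.sq_sqrt (by positivity)

theorem altCurvature_pos (hκ₀ : κ s ≠ 0) : 0 < altCurvature κ τ s :=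
  Real.sqrt_pos.2 (by positivity)

theorem altTorsion_eq_div_altCurvature_sq (hκ : DifferentiableAt ℝ κ s)
    (hτ : DifferentiableAt ℝ τ s) (hκ₀ : κ s ≠ 0) :
    altTorsion κ τ s = (deriv τ s * κ s - τ s * deriv κ s) / altCurvature κ τ s ^ 2 := by
  have : κ s ^ 2 + τ s ^ 2 ≠ 0 := by positivity
  rw [altTorsion, altCurvature_sq, deriv_fun_div hτ hκ hκ₀]
  field_simp

theorem hasDerivAt_curvature_div_altCurvature (hκ : DifferentiableAt ℝ κ s)
    (hτ : DifferentiableAt ℝ τ s) (hκ₀ : κ s ≠ 0) :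
    HasDerivAt (fun t => κ t / altCurvature κ τ t)
      (-(τ s / altCurvature κ τ s * altTorsion κ τ s)) s := by
  have hf : altCurvature κ τ s ≠ 0 := (altCurvature_pos hκ₀).ne'
  refine (hasDerivAt_div_sqrt_sq_add_sq hκ.hasDerivAt hτ.hasDerivAt
    (by positivity)).congr_deriv ?_
  rw [altTorsion_eq_div_altCurvature_sq hκ hτ hκ₀, ← altCurvature]
  field_simp
  ring

theorem hasDerivAt_torsion_div_altCurvature (hκ : DifferentiableAt ℝ κ s)
    (hτ : DifferentiableAt ℝ τ s) (hκ₀ : κ s ≠ 0) :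
    HasDerivAt (fun t => τ t / altCurvature κ τ t)
      (κ s / altCurvature κ τ s * altTorsion κ τ s) s := by
  have hf : altCurvature κ τ s ≠ 0 := (altCurvature_pos hκ₀).ne'
  have h := hasDerivAt_div_sqrt_sq_add_sq hτ.hasDerivAt hκ.hasDerivAt (by positivity)
  simp only [add_comm (τ _ ^ 2)] at h
  refine h.congr_deriv ?_
  rw [altTorsion_eq_div_altCurvature_sq hκ hτ hκ₀, ← altCurvature]
  field_simp

namespace IsFrenetFrame

variable {T N B : ℝ → EuclideanSpace ℝ (Fin 3)} (h : IsFrenetFrame T N B κ τ)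

include h

theorem norm_binormal (s : ℝ) : ‖B s‖ = 1 := by
  rw [h.binormal_eq, norm_cross3_of_inner_eq_zero (h.inner_tangent_normal s), h.norm_tangent,
    h.norm_normal, one_mul]

theorem cross3_tangent_binormal (s : ℝ) : cross3 (T s) (B s) = -N s := by
  rw [h.binormal_eq, cross3_cross3_right, h.inner_tangent_normal, real_inner_self_eq_norm_sq,
    h.norm_tangent]
  simp

theorem hasDerivAt_binormal (s : ℝ) : HasDerivAt B ((-τ s) • N s) s := by
  rw [funext h.binormal_eq]
  refine (hasDerivAt_cross3 (h.hasDerivAt_tangent s) (h.hasDerivAt_normal s)).congr_deriv ?_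
  have hNN : cross3 (κ s • N s) (N s) = 0 := by
    rw [isBoundedBilinearMap_cross3.smul_left, cross3_self, smul_zero]
  rw [hNN, cross3_smul_add_smul_right, cross3_self, h.cross3_tangent_binormal]
  module

theorem norm_altFrameW (hκ₀ : κ s ≠ 0) : ‖altFrameW T B κ τ s‖ = 1 := by
  have hTB : ⟪τ s • T s, κ s • B s⟫ = 0 := by
    rw [h.binormal_eq, real_inner_smul_left, real_inner_smul_right, inner_left_cross3]
    ring
  have hdarboux : ‖τ s • T s + κ s • B s‖ ^ 2 = altCurvature κ τ s ^ 2 := by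
    rw [norm_add_sq_real, hTB, norm_smul, norm_smul, h.norm_tangent, h.norm_binormal,
      altCurvature_sq]
    simp only [Real.norm_eq_abs, mul_one, sq_abs]
    ring
  have hf := altCurvature_pos (τ := τ) hκ₀
  rw [altFrameW, ← altCurvature, norm_smul, norm_inv, Real.norm_of_nonneg hf.le,
    (sq_eq_sq₀ (norm_nonneg _) hf.le).1 hdarboux, inv_mul_cancel₀ hf.ne']

theorem inner_normal_altFrameW (s : ℝ) : ⟪N s, altFrameW T B κ τ s⟫ = 0 := by
  have hNT : ⟪N s, T s⟫ = 0 := (real_inner_comm _ _).trans (h.inner_tangent_normal s)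
  have hNB : ⟪N s, B s⟫ = 0 := h.binormal_eq s ▸ inner_right_cross3 _ _
  simp only [altFrameW, real_inner_smul_right, inner_add_right, hNT, hNB, mul_zero, add_zero]

theorem cross3_tangent_altFrameC (s : ℝ) :
    cross3 (T s) (altFrameC T B κ τ s) = (-(τ s / altCurvature κ τ s)) • N s := by
  rw [altFrameC, isBoundedBilinearMap_cross3.smul_right, cross3_smul_add_smul_right, cross3_self,
    h.cross3_tangent_binormal, altCurvature]
  module

theorem hasDerivAt_altFrameC (hκ : DifferentiableAt ℝ κ s) (hτ : DifferentiableAt ℝ τ s)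
    (hκ₀ : κ s ≠ 0) :
    HasDerivAt (altFrameC T B κ τ)
      ((-altCurvature κ τ s) • N s + altTorsion κ τ s • altFrameW T B κ τ s) s := by
  have hC : altFrameC T B κ τ = fun t =>
      (-(κ t / altCurvature κ τ t)) • T t + (τ t / altCurvature κ τ t) • B t := by
    funext t
    rw [altFrameC, altCurvature]
    module
  have hf : altCurvature κ τ s = (κ s ^ 2 + τ s ^ 2) / altCurvature κ τ s := by
    rw [← altCurvature_sq, sq, mul_self_div_self]
  rw [hC]
  refine (((hasDerivAt_curvature_div_altCurvature hκ hτ hκ₀).fun_neg.fun_smul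
    (h.hasDerivAt_tangent s)).fun_add ((hasDerivAt_torsion_div_altCurvature hκ hτ hκ₀).fun_smul
    (h.hasDerivAt_binormal s))).congr_deriv ?_
  rw [altFrameW, ← altCurvature]
  linear_combination (norm := module) hf • N s

theorem det3_tangent_altFrameC_deriv (hκ : DifferentiableAt ℝ κ s) (hτ : DifferentiableAt ℝ τ s)
    (hκ₀ : κ s ≠ 0) :
    det3 (T s) (altFrameC T B κ τ s) (deriv (altFrameC T B κ τ) s) = τ s := by
  have hf : altCurvature κ τ s ≠ 0 := (altCurvature_pos hκ₀).ne'
  rw [det3_eq_inner_cross3, h.cross3_tangent_altFrameC, (h.hasDerivAt_altFrameC hκ hτ hκ₀).deriv,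
    real_inner_smul_left, inner_add_right, real_inner_smul_right, real_inner_smul_right,
    h.inner_normal_altFrameW, real_inner_self_eq_norm_sq, h.norm_normal]
  field_simp
  ring

theorem norm_deriv_altFrameC_sq (hκ : DifferentiableAt ℝ κ s) (hτ : DifferentiableAt ℝ τ s)
    (hκ₀ : κ s ≠ 0) :
    ‖deriv (altFrameC T B κ τ) s‖ ^ 2 = altCurvature κ τ s ^ 2 + altTorsion κ τ s ^ 2 := by
  rw [(h.hasDerivAt_altFrameC hκ hτ hκ₀).deriv, norm_add_sq_real, norm_smul, norm_smul,
    real_inner_smul_left, real_inner_smul_right, h.inner_normal_altFrameW, h.norm_normal,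
    h.norm_altFrameW hκ₀]
  simp

theorem distributionParameter_altFrameC (hκ : DifferentiableAt ℝ κ s)
    (hτ : DifferentiableAt ℝ τ s) (hκ₀ : κ s ≠ 0) :
    distributionParameter T (altFrameC T B κ τ) s =
      τ s / (altCurvature κ τ s ^ 2 + altTorsion κ τ s ^ 2) := by
  rw [distributionParameter, h.det3_tangent_altFrameC_deriv hκ hτ hκ₀,
    h.norm_deriv_altFrameC_sq hκ hτ hκ₀]

theorem distributionParameter_altFrameC_eq_zero_iff (hκ : DifferentiableAt ℝ κ s)
    (hτ : DifferentiableAt ℝ τ s) (hκ₀ : κ s ≠ 0) :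
    distributionParameter T (altFrameC T B κ τ) s = 0 ↔ τ s = 0 := by
  have hf := altCurvature_pos (τ := τ) hκ₀
  rw [h.distributionParameter_altFrameC hκ hτ hκ₀, div_eq_zero_iff, or_iff_left (by positivity)]

end IsFrenetFrame

end AlternativeFrame

section Curve

/-- The curvature of a unit-speed curve. -/
noncomputable def curvature {E : Type*} [NormedAddCommGroup E] [NormedSpace ℝ E] (α : ℝ → E)
    (s : ℝ) : ℝ :=
  ‖deriv (deriv α) s‖

/-- The principal normal of a unit-speed curve; it is `0` where the curvature vanishes. -/
noncomputable def principalNormal {E : Type*} [NormedAddCommGroup E] [NormedSpace ℝ E] (α : ℝ → E)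
    (s : ℝ) : E :=
  (curvature α s)⁻¹ • deriv (deriv α) s

/-- The binormal of a unit-speed space curve. -/
noncomputable def binormal (α : ℝ → EuclideanSpace ℝ (Fin 3)) (s : ℝ) : EuclideanSpace ℝ (Fin 3) :=
  cross3 (deriv α s) (principalNormal α s)

/-- The torsion of a unit-speed space curve. -/
noncomputable def torsion (α : ℝ → EuclideanSpace ℝ (Fin 3)) (s : ℝ) : ℝ :=
  ⟪deriv (principalNormal α) s, binormal α s⟫

section NormedSpace

variable {E : Type*} [NormedAddCommGroup E] [NormedSpace ℝ E] {α : ℝ → E} {s : ℝ}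

theorem norm_principalNormal (hκ₀ : curvature α s ≠ 0) : ‖principalNormal α s‖ = 1 := by
  rw [principalNormal, norm_smul, norm_inv, curvature, norm_norm]
  exact inv_mul_cancel₀ hκ₀

theorem curvature_smul_principalNormal (hκ₀ : curvature α s ≠ 0) :
    curvature α s • principalNormal α s = deriv (deriv α) s :=
  smul_inv_smul₀ hκ₀ _

end NormedSpace

section InnerProductSpace

variable {E : Type*} [NormedAddCommGroup E] [InnerProductSpace ℝ E] {α : ℝ → E}
  {n : WithTop ℕ∞}

theorem contDiff_curvature (hα : ContDiff ℝ (n + 1 + 1) α) (hκ₀ : ∀ s, curvature α s ≠ 0) :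
    ContDiff ℝ n (curvature α) :=
  hα.deriv'.deriv'.norm ℝ fun s => norm_ne_zero_iff.1 (hκ₀ s)

theorem contDiff_principalNormal (hα : ContDiff ℝ (n + 1 + 1) α) (hκ₀ : ∀ s, curvature α s ≠ 0) :
    ContDiff ℝ n (principalNormal α) :=
  ((contDiff_curvature hα hκ₀).inv hκ₀).smul hα.deriv'.deriv'

theorem inner_deriv_principalNormal_eq_zero {s : ℝ} (hα : DifferentiableAt ℝ (deriv α) s)
    (hunit : ∀ t, ‖deriv α t‖ = 1) : ⟪deriv α s, principalNormal α s⟫ = 0 := by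
  rw [principalNormal, real_inner_smul_right,
    inner_deriv_eq_zero_of_norm_eq_const hα.hasDerivAt hunit, mul_zero]

end InnerProductSpace

variable {α : ℝ → EuclideanSpace ℝ (Fin 3)} {n : WithTop ℕ∞}

theorem contDiff_torsion (hα : ContDiff ℝ (n + 1 + 1 + 1) α) (hκ₀ : ∀ s, curvature α s ≠ 0) :
    ContDiff ℝ n (torsion α) := by
  have hN : ContDiff ℝ (n + 1) (principalNormal α) := contDiff_principalNormal hα hκ₀
  have hB : ContDiff ℝ (n + 1) (binormal α) :=
    isBoundedBilinearMap_cross3.contDiff.comp ((hα.deriv'.of_le le_self_add).prodMk hN)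
  exact hN.deriv'.inner ℝ (hB.of_le le_self_add)

theorem isFrenetFrame_of_norm_deriv_eq_one (hα : ContDiff ℝ 3 α) (hunit : ∀ s, ‖deriv α s‖ = 1)
    (hκ₀ : ∀ s, curvature α s ≠ 0) :
    IsFrenetFrame (deriv α) (principalNormal α) (binormal α) (curvature α) (torsion α) := by
  have hTdiff : Differentiable ℝ (deriv α) := (hα.of_le (by norm_num)).differentiable_deriv_two
  have hT (s) : HasDerivAt (deriv α) (curvature α s • principalNormal α s) s := by
    rw [curvature_smul_principalNormal (hκ₀ s)]
    exact (hTdiff s).hasDerivAt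
  have hN (s) : HasDerivAt (principalNormal α) (deriv (principalNormal α) s) s :=
    ((contDiff_principalNormal (n := 1) (hα.of_le (by norm_num)) hκ₀).differentiable
      one_ne_zero s).hasDerivAt
  have hNunit (s) : ‖principalNormal α s‖ = 1 := norm_principalNormal (hκ₀ s)
  have hTN (s) : ⟪deriv α s, principalNormal α s⟫ = 0 :=
    inner_deriv_principalNormal_eq_zero (hTdiff s) hunit
  have hTN' (s) : ⟪deriv α s, deriv (principalNormal α) s⟫ = -curvature α s := by
    have h := inner_add_inner_eq_zero_of_inner_eq_const (hT s) (hN s) hTN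
    rw [real_inner_smul_left, real_inner_self_eq_norm_sq, hNunit] at h
    linarith
  refine ⟨hunit, hNunit, hTN, fun _ => rfl, hT, fun s => (hN s).congr_deriv ?_⟩
  calc
    deriv (principalNormal α) s
    _ = ⟪deriv α s, deriv (principalNormal α) s⟫ • deriv α s +
          ⟪principalNormal α s, deriv (principalNormal α) s⟫ • principalNormal α s +
          ⟪binormal α s, deriv (principalNormal α) s⟫ • binormal α s :=
      eq_inner_smul_add_inner_smul_cross3 (hunit s) (hNunit s) (hTN s)
    _ = (-curvature α s) • deriv α s + torsion α s • binormal α s := by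
      rw [hTN', inner_deriv_eq_zero_of_norm_eq_const (hN s) hNunit, zero_smul, add_zero,
        real_inner_comm, ← torsion]

end Curve

theorem stmt_6_general
    (α : ℝ → EuclideanSpace ℝ (Fin 3))
    (hα : ContDiff ℝ 4 α)
    (hunit : ∀ s, ‖deriv α s‖ = 1)
    (T : ℝ → EuclideanSpace ℝ (Fin 3)) (hT : ∀ s, T s = deriv α s)
    (κ : ℝ → ℝ) (hκ : ∀ s, κ s = ‖deriv (deriv α) s‖) (hκpos : ∀ s, 0 < κ s)
    (N : ℝ → EuclideanSpace ℝ (Fin 3)) (hN : ∀ s, N s = (κ s)⁻¹ • deriv (deriv α) s)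
    (B : ℝ → EuclideanSpace ℝ (Fin 3)) (hB : ∀ s, B s = cross3 (T s) (N s))
    (τ : ℝ → ℝ) (hτ : ∀ s, τ s = ⟪deriv N s, B s⟫)
    (f : ℝ → ℝ) (hf : ∀ s, f s = Real.sqrt (κ s ^ 2 + τ s ^ 2))
    (g : ℝ → ℝ) (hg : ∀ s, g s = κ s ^ 2 / (κ s ^ 2 + τ s ^ 2) * deriv (fun u => τ u / κ u) s)
    (C : ℝ → EuclideanSpace ℝ (Fin 3))
    (hC : ∀ s, C s = (Real.sqrt (κ s ^ 2 + τ s ^ 2))⁻¹ • ((-κ s) • T s + τ s • B s)) :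
    (∀ s : ℝ,
      det3 (T s) (C s) (deriv C s) / ‖deriv C s‖ ^ 2 = τ s / (f s ^ 2 + g s ^ 2)) ∧
    ((∀ s : ℝ, det3 (T s) (C s) (deriv C s) / ‖deriv C s‖ ^ 2 = 0) ↔ (∀ s : ℝ, τ s = 0)) := by
  obtain rfl : T = deriv α := funext hT
  obtain rfl : κ = curvature α := funext hκ
  obtain rfl : N = principalNormal α := funext hN
  obtain rfl : B = binormal α := funext hB
  obtain rfl : τ = torsion α := funext hτ
  obtain rfl : f = altCurvature (curvature α) (torsion α) := funext hf
  obtain rfl : g = altTorsion (curvature α) (torsion α) := funext hg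
  obtain rfl : C = altFrameC (deriv α) (binormal α) (curvature α) (torsion α) := funext hC
  have hκ₀ (s) : curvature α s ≠ 0 := (hκpos s).ne'
  have hframe := isFrenetFrame_of_norm_deriv_eq_one (hα.of_le (by norm_num)) hunit hκ₀
  have hκdiff : Differentiable ℝ (curvature α) :=
    (contDiff_curvature (n := 1) (hα.of_le (by norm_num)) hκ₀).differentiable one_ne_zero
  have hτdiff : Differentiable ℝ (torsion α) :=
    (contDiff_torsion (n := 1) (hα.of_le (by norm_num)) hκ₀).differentiable one_ne_zero
  exact ⟨fun s => hframe.distributionParameter_altFrameC (hκdiff s) (hτdiff s) (hκ₀ s),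
    forall_congr' fun s =>
      hframe.distributionParameter_altFrameC_eq_zero_iff (hκdiff s) (hτdiff s) (hκ₀ s)⟩

theorem stmt_6
    (α : ℝ → EuclideanSpace ℝ (Fin 3))
    (hα : ContDiff ℝ (⊤ : ℕ∞) α)
    (hunit : ∀ s, ‖deriv α s‖ = 1)
    (T : ℝ → EuclideanSpace ℝ (Fin 3)) (hT : ∀ s, T s = deriv α s)
    (κ : ℝ → ℝ) (hκ : ∀ s, κ s = ‖deriv (deriv α) s‖) (hκpos : ∀ s, 0 < κ s)
    (N : ℝ → EuclideanSpace ℝ (Fin 3)) (hN : ∀ s, N s = (κ s)⁻¹ • deriv (deriv α) s)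
    (B : ℝ → EuclideanSpace ℝ (Fin 3)) (hB : ∀ s, B s = cross3 (T s) (N s))
    (τ : ℝ → ℝ) (hτ : ∀ s, τ s = ⟪deriv N s, B s⟫)
    (f : ℝ → ℝ) (hf : ∀ s, f s = Real.sqrt (κ s ^ 2 + τ s ^ 2))
    (g : ℝ → ℝ) (hg : ∀ s, g s = κ s ^ 2 / (κ s ^ 2 + τ s ^ 2) * deriv (fun u => τ u / κ u) s)
    (C : ℝ → EuclideanSpace ℝ (Fin 3))
    (hC : ∀ s, C s = (Real.sqrt (κ s ^ 2 + τ s ^ 2))⁻¹ • ((-κ s) • T s + τ s • B s))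
    (W : ℝ → EuclideanSpace ℝ (Fin 3))
    (hW : ∀ s, W s = (Real.sqrt (κ s ^ 2 + τ s ^ 2))⁻¹ • (τ s • T s + κ s • B s)) :
    (∀ s : ℝ,
      det3 (T s) (C s) (deriv C s) / ‖deriv C s‖ ^ 2 = τ s / (f s ^ 2 + g s ^ 2)) ∧
    ((∀ s : ℝ, det3 (T s) (C s) (deriv C s) / ‖deriv C s‖ ^ 2 = 0) ↔ (∀ s : ℝ, τ s = 0)) :=
  stmt_6_general α (contDiff_infty.1 hα 4) hunit T hT κ hκ hκpos N hN B hB τ hτ f hf g hg C hC
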